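/- Let 𝒮 be a semi-ring and ℛ the ring it generates (finite unions of elements of 𝒮). For a signed charge ν on 𝒮 let ν̂ denote its unique additive extension to ℛ. If (ν_j)_{j∈J} is a family of signed charges on 𝒮 satisfying the admissibility hypothesis, then sup_{j∈J} ν̂_j (computed via partitions by elements of ℛ) equals the extension to ℛ of ν := sup_{j∈J} ν_j (computed via partitions by elements of 𝒮). In particular, for any signed charge μ on 𝒮, (μ̂)⁺ = (μ⁺)^ and (μ̂)⁻ = (μ⁻)^. -/

import Mathlib

/-!
All three identities are instances of one fact, `partSup_genRing`. Let `f` be a set function on the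
semi-ring `S` with `f ∅ = 0`, and let `g` on the generated ring agree with `f` on `S` and satisfy
`g (⋃₀ P) ≤ ∑ C ∈ P, f C` for finite disjoint `P ⊆ S`. Then the partition supremum of `g` over the
ring is the additive extension of the partition supremum of `f` over `S`.

* `≤`: given a partition `Q` of `⋃₀ P` by ring elements, decompose every member of `Q` into
  disjoint elements `K` of `S` and cut each `K` along the sets `C ∈ P`. Each step can only increase
  the sum, and for fixed `C` the pieces `K ∩ C` form an `S`-partition of `C`.
* `≥`: partitions of the sets `C ∈ P` glue to a partition of `⋃₀ P`, and a finite sum of suprema is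
  approximated from below by simultaneous choices of partitions (`exists_lt_sum`).

The fact is applied with `f` equal to `⨆ j, ν j`, `max μ 0` and `max (-μ) 0`, and `g` built in the
same way from the extensions. Distinct pieces of a refinement may coincide only when they are empty,
which is harmless because `f ∅ = 0`.
-/

open MeasureTheory Set
open scoped ENNReal NNReal BigOperators

namespace SignedCharges

variable {Ω : Type*}

/-- `P` is a finite partition of `A` by elements of the family `S`. -/
def IsPartition (S : Set (Set Ω)) (A : Set Ω) (P : Finset (Set Ω)) : Prop :=
  ↑P ⊆ S ∧ (P : Set (Set Ω)).PairwiseDisjoint id ∧ ⋃₀ ↑P = A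

/-- The partition-supremum `μ_F` of a family `F = (ν j)` of `EReal`-valued set functions:
`μ_F(A) = sup` over finite partitions `Π` of `A` by elements of `S` of `Σ_{C ∈ Π} sup_j ν j C`. -/
noncomputable def supFun {J : Type*} (S : Set (Set Ω)) (ν : J → Set Ω → EReal)
    (A : Set Ω) : EReal :=
  ⨆ P : Finset (Set Ω), ⨆ _ : IsPartition S A P, ∑ C ∈ P, ⨆ j, ν j C

/-- The admissibility hypothesis: `sup_j ν j A > -∞` for every `A ∈ S`. -/
def Admissible {J : Type*} (S : Set (Set Ω)) (ν : J → Set Ω → EReal) : Prop :=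
  ∀ A ∈ S, ⊥ < ⨆ j, ν j A

/-- An `EReal`-valued signed charge on `S`: vanishes on `∅`, finitely additive on finite
disjoint unions within `S`, and omits at least one of the values `+∞`, `-∞` on `S`. -/
structure IsCharge (S : Set (Set Ω)) (μ : Set Ω → EReal) : Prop where
  empty : μ ∅ = 0
  additive : ∀ (n : ℕ) (A : Fin n → Set Ω), (∀ i, A i ∈ S) →
    Pairwise (Function.onFun Disjoint A) → (⋃ i, A i) ∈ S → μ (⋃ i, A i) = ∑ i, μ (A i)
  omits : (∀ A ∈ S, μ A ≠ ⊤) ∨ (∀ A ∈ S, μ A ≠ ⊥)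

/-- A finite (real-valued) signed charge on `S`. -/
structure IsRealCharge (S : Set (Set Ω)) (μ : Set Ω → ℝ) : Prop where
  empty : μ ∅ = 0
  additive : ∀ (n : ℕ) (A : Fin n → Set Ω), (∀ i, A i ∈ S) →
    Pairwise (Function.onFun Disjoint A) → (⋃ i, A i) ∈ S → μ (⋃ i, A i) = ∑ i, μ (A i)

/-- Countable additivity for a real-valued set function (unconditional convergence). -/
def CountablyAdditiveR (S : Set (Set Ω)) (μ : Set Ω → ℝ) : Prop :=
  ∀ A : ℕ → Set Ω, (∀ n, A n ∈ S) → Pairwise (Function.onFun Disjoint A) →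
    (⋃ n, A n) ∈ S → HasSum (fun n => μ (A n)) (μ (⋃ n, A n))

/-- Countable sub-additivity for an `EReal`-valued set function. -/
def CountablySubadditiveE (S : Set (Set Ω)) (μ : Set Ω → EReal) : Prop :=
  ∀ A : ℕ → Set Ω, (∀ n, A n ∈ S) → Pairwise (Function.onFun Disjoint A) →
    (⋃ n, A n) ∈ S → μ (⋃ n, A n) ≤ ∑' n, μ (A n)

/-- Countable additivity for an `EReal`-valued set function. -/
def CountablyAdditiveE (S : Set (Set Ω)) (μ : Set Ω → EReal) : Prop :=
  ∀ A : ℕ → Set Ω, (∀ n, A n ∈ S) → Pairwise (Function.onFun Disjoint A) →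
    (⋃ n, A n) ∈ S → μ (⋃ n, A n) = ∑' n, μ (A n)

/-- `μ⁺ = μ ∨ 0` : sup over finite partitions of `Σ_{C} max (μ C) 0`. -/
noncomputable def pos (S : Set (Set Ω)) (μ : Set Ω → EReal) (A : Set Ω) : EReal :=
  ⨆ P : Finset (Set Ω), ⨆ _ : IsPartition S A P, ∑ C ∈ P, max (μ C) 0

/-- `μ⁻ = (-μ) ∨ 0` : sup over finite partitions of `Σ_{C} max (-μ C) 0`. -/
noncomputable def neg (S : Set (Set Ω)) (μ : Set Ω → EReal) (A : Set Ω) : EReal :=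
  ⨆ P : Finset (Set Ω), ⨆ _ : IsPartition S A P, ∑ C ∈ P, max (-μ C) 0

/-- The variation `|μ|` : sup over finite partitions of `Σ_{C} |μ C|`. -/
noncomputable def var (S : Set (Set Ω)) (μ : Set Ω → EReal) (A : Set Ω) : EReal :=
  ⨆ P : Finset (Set Ω), ⨆ _ : IsPartition S A P, ∑ C ∈ P, max (μ C) (-μ C)

/-- The infimum `α ∧ β` of two nonnegative charges:
inf over finite partitions of `Σ_{C} min (α C) (β C)`. -/
noncomputable def infC (S : Set (Set Ω)) (α β : Set Ω → EReal) (A : Set Ω) : EReal :=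
  ⨅ P : Finset (Set Ω), ⨅ _ : IsPartition S A P, ∑ C ∈ P, min (α C) (β C)

/-- The ring generated by a semi-ring: finite unions of elements of `S`. -/
def genRing (S : Set (Set Ω)) : Set (Set Ω) :=
  {A | ∃ P : Finset (Set Ω), ↑P ⊆ S ∧ A = ⋃₀ ↑P}

/-- Coercion of a real-valued set function to an `EReal`-valued one. -/
def toE (μ : Set Ω → ℝ) : Set Ω → EReal := fun A => (μ A : EReal)

/-- `μ` has finite variation on `S`. -/
def FiniteVar (S : Set (Set Ω)) (μ : Set Ω → ℝ) : Prop :=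
  ∀ A ∈ S, var S (toE μ) A ≠ ⊤

/-- The common shape of `supFun`, `pos` and `neg`: the supremum of `∑ C ∈ P, f C` over the finite
partitions `P` of `A` by elements of `S`. -/
noncomputable def partSup (S : Set (Set Ω)) (f : Set Ω → EReal) (A : Set Ω) : EReal :=
  ⨆ P : Finset (Set Ω), ⨆ _ : IsPartition S A P, ∑ C ∈ P, f C

lemma IsPartition.mono {S R : Set (Set Ω)} (h : S ⊆ R) {A : Set Ω} {P : Finset (Set Ω)}
    (hP : IsPartition S A P) : IsPartition R A P :=
  ⟨hP.1.trans h, hP.2⟩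

lemma IsPartition.subset {S : Set (Set Ω)} {A : Set Ω} {P : Finset (Set Ω)}
    (hP : IsPartition S A P) {C : Set Ω} (hC : C ∈ P) : C ⊆ A :=
  hP.2.2 ▸ subset_sUnion_of_mem (Finset.mem_coe.2 hC)

lemma le_partSup {S : Set (Set Ω)} {f : Set Ω → EReal} {A : Set Ω} {P : Finset (Set Ω)}
    (hP : IsPartition S A P) : ∑ C ∈ P, f C ≤ partSup S f A :=
  le_iSup₂_of_le P hP le_rfl

lemma subset_genRing (S : Set (Set Ω)) : S ⊆ genRing S := fun A hA =>
  ⟨{A}, by simpa using hA, by simp⟩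

open Classical in
lemma exists_partition_of_mem_genRing {S : Set (Set Ω)} (hS : IsSetSemiring S) {D : Set Ω}
    (hD : D ∈ genRing S) : ∃ T : Finset (Set Ω), IsPartition S D T := by
  obtain ⟨J, hJ, rfl⟩ := hD
  refine ⟨J.biUnion (hS.disjointOfUnion hJ), ?_, ?_, ?_⟩
  · simpa using fun j hj => hS.disjointOfUnion_subset hJ hj
  · simpa using hS.pairwiseDisjoint_biUnion_disjointOfUnion hJ
  · simpa using hS.sUnion_disjointOfUnion hJ

open Classical in
/-- Gluing partitions of the members of a disjoint family gives a partition of the union. -/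
lemma isPartition_biUnion {S : Set (Set Ω)} {I : Finset (Set Ω)} {T : Set Ω → Finset (Set Ω)}
    (hI : (I : Set (Set Ω)).PairwiseDisjoint id) (hT : ∀ D ∈ I, IsPartition S D (T D)) :
    IsPartition S (⋃₀ ↑I) (I.biUnion T) := by
  refine ⟨?_, ?_, ?_⟩
  · simpa using fun j hj => (hT j hj).1
  · intro a ha b hb hab
    obtain ⟨D, hD, haD⟩ := Finset.mem_biUnion.1 (Finset.mem_coe.1 ha)
    obtain ⟨E, hE, hbE⟩ := Finset.mem_biUnion.1 (Finset.mem_coe.1 hb)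
    by_cases hDE : D = E
    · subst hDE
      exact (hT D hD).2.1 haD hbE hab
    · exact (hI hD hE hDE).mono ((hT D hD).subset haD) ((hT E hE).subset hbE)
  · ext x
    simp only [mem_sUnion, Finset.mem_coe, Finset.mem_biUnion]
    constructor
    · rintro ⟨C, ⟨D, hD, hC⟩, hx⟩
      exact ⟨D, hD, (hT D hD).subset hC hx⟩
    · rintro ⟨D, hD, hx⟩
      rw [← (hT D hD).2.2] at hx
      obtain ⟨C, hC, hxC⟩ := hx
      exact ⟨C, ⟨D, hD, hC⟩, hxC⟩

open Classical in
lemma sum_biUnion_partition {S : Set (Set Ω)} {f : Set Ω → EReal} (hf : f ∅ = 0)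
    {I : Finset (Set Ω)} {T : Set Ω → Finset (Set Ω)}
    (hI : (I : Set (Set Ω)).PairwiseDisjoint id) (hT : ∀ D ∈ I, IsPartition S D (T D)) :
    ∑ C ∈ I.biUnion T, f C = ∑ D ∈ I, ∑ C ∈ T D, f C := by
  refine Finset.sum_biUnion_of_pairwise_eq_zero fun D hD E hE hDE C hC => ?_
  -- only `∅` can belong to the partitions of two disjoint sets
  obtain ⟨hCD, hCE⟩ := Finset.mem_inter.1 hC
  have : C = ∅ := subset_empty_iff.1 <|
    (hI hD hE hDE) ((hT D hD).subset hCD) ((hT E hE).subset hCE)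
  rw [this, hf]

open Classical in
/-- Cutting each member of a partition by a set `C` of the semi-ring. -/
lemma isPartition_inter {S : Set (Set Ω)} (hS : IsSetSemiring S) {A C : Set Ω} (hC : C ∈ S)
    {P : Finset (Set Ω)} (hP : IsPartition S A P) :
    IsPartition S (A ∩ C) (P.image (· ∩ C)) := by
  refine ⟨?_, ?_, ?_⟩
  · simpa [Set.subset_def] using fun D hD => hS.inter_mem D (hP.1 hD) C hC
  · rw [Finset.coe_image]
    rintro _ ⟨a, ha, rfl⟩ _ ⟨b, hb, rfl⟩ hab
    have : a ≠ b := fun h => hab (by rw [h])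
    exact (hP.2.1 ha hb this).mono inter_subset_left inter_subset_left
  · rw [← hP.2.2, Finset.coe_image, sUnion_image, sUnion_eq_biUnion, iUnion₂_inter]

open Classical in
lemma sum_image_inter {S : Set (Set Ω)} {f : Set Ω → EReal} (hf : f ∅ = 0) {A : Set Ω} (C : Set Ω)
    {P : Finset (Set Ω)} (hP : IsPartition S A P) :
    ∑ D ∈ P.image (· ∩ C), f D = ∑ D ∈ P, f (D ∩ C) :=
  Finset.sum_image_of_disjoint hf fun _ ha _ hb hab =>
    (hP.2.1 ha hb hab).mono inter_subset_left inter_subset_left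

/-- Any value strictly below a finite sum of partition suprema is beaten by one simultaneous choice
of partitions. No finiteness is needed: if one summand is `⊥`, so is the sum, and nothing lies
strictly below it. -/
lemma exists_lt_sum {S : Set (Set Ω)} {f : Set Ω → EReal} (P : Finset (Set Ω)) {b : EReal}
    (hb : b < ∑ C ∈ P, partSup S f C) :
    ∃ T : Set Ω → Finset (Set Ω), (∀ C ∈ P, IsPartition S C (T C)) ∧
      b < ∑ C ∈ P, ∑ D ∈ T C, f D := by
  classical
  induction P using Finset.induction_on generalizing b with
  | empty => exact ⟨fun _ => ∅, by simp, by simpa using hb⟩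
  | insert c P hc ih =>
    rw [Finset.sum_insert hc] at hb
    by_contra! H
    refine hb.not_ge (EReal.add_le_of_forall_lt fun a' ha' b' hb' => ?_)
    obtain ⟨T, hT, hbT⟩ := ih hb'
    simp only [partSup, lt_iSup_iff] at ha'
    obtain ⟨Q, hQ, haQ⟩ := ha'
    have hne : ∀ C ∈ P, C ≠ c := fun C hC h => hc (h ▸ hC)
    have hle := H (Function.update T c Q) (fun C hC => by
      rcases Finset.mem_insert.1 hC with rfl | hC
      · simpa using hQ
      · simpa [hne C hC] using hT C hC)
    have hsum : ∑ C ∈ P, ∑ D ∈ Function.update T c Q C, f D = ∑ C ∈ P, ∑ D ∈ T C, f D :=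
      Finset.sum_congr rfl fun C hC => by rw [Function.update_of_ne (hne C hC)]
    rw [Finset.sum_insert hc, Function.update_self, hsum] at hle
    exact (add_le_add haQ.le hbT.le).trans hle

/-- If `g` on the ring restricts to `f` on the semi-ring and is dominated by the `f`-sums over
disjoint decompositions, then the partition supremum of `g` over the ring is the additive
extension of the partition supremum of `f` over the semi-ring. -/
lemma partSup_genRing {S : Set (Set Ω)} (hS : IsSetSemiring S) {f g : Set Ω → EReal}
    (hf : f ∅ = 0) (hgf : ∀ C ∈ S, g C = f C)
    (hg : ∀ P : Finset (Set Ω), ↑P ⊆ S → (P : Set (Set Ω)).PairwiseDisjoint id →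
      g (⋃₀ ↑P) ≤ ∑ C ∈ P, f C)
    (P : Finset (Set Ω)) (hPS : ↑P ⊆ S) (hPd : (P : Set (Set Ω)).PairwiseDisjoint id) :
    partSup (genRing S) g (⋃₀ ↑P) = ∑ C ∈ P, partSup S f C := by
  classical
  have hP : IsPartition S (⋃₀ ↑P) P := ⟨hPS, hPd, rfl⟩
  have hg' : ∀ {A : Set Ω} {Q : Finset (Set Ω)}, IsPartition S A Q → g A ≤ ∑ C ∈ Q, f C :=
    fun {A Q} hQ => hQ.2.2 ▸ hg Q hQ.1 hQ.2.1
  apply le_antisymm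
  · refine iSup₂_le fun Q hQ => ?_
    choose! T hT using fun D (hD : D ∈ Q) => exists_partition_of_mem_genRing hS (hQ.1 hD)
    have hV : IsPartition S (⋃₀ ↑P) (Q.biUnion T) := hQ.2.2 ▸ isPartition_biUnion hQ.2.1 hT
    calc ∑ D ∈ Q, g D
        ≤ ∑ D ∈ Q, ∑ K ∈ T D, f K := Finset.sum_le_sum fun D hD => hg' (hT D hD)
      _ = ∑ K ∈ Q.biUnion T, f K := (sum_biUnion_partition hf hQ.2.1 hT).symm
      _ ≤ ∑ K ∈ Q.biUnion T, ∑ C ∈ P, f (K ∩ C) := Finset.sum_le_sum fun K hK => by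
          have h := isPartition_inter hS (hV.1 hK) hP
          rw [inter_eq_right.2 (hV.subset hK)] at h
          have h' := hg' h
          rw [sum_image_inter hf K hP, hgf K (hV.1 hK)] at h'
          simpa only [inter_comm] using h'
      _ = ∑ C ∈ P, ∑ K ∈ Q.biUnion T, f (K ∩ C) := Finset.sum_comm
      _ ≤ ∑ C ∈ P, partSup S f C := Finset.sum_le_sum fun C hC => by
          have h := isPartition_inter hS (hPS hC) hV
          rw [inter_eq_right.2 (hP.subset hC)] at h
          rw [← sum_image_inter hf C hV]
          exact le_partSup h
  · refine le_of_forall_lt fun b hb => ?_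
    obtain ⟨T, hT, hbT⟩ := exists_lt_sum P hb
    have hV := isPartition_biUnion hPd hT
    rw [← sum_biUnion_partition hf hPd hT,
      ← Finset.sum_congr rfl fun C hC => hgf C (hV.1 hC)] at hbT
    exact hbT.trans_le (le_partSup (hV.mono (subset_genRing S)))

lemma hat_eq {S : Set (Set Ω)} {μ μhat : Set Ω → EReal}
    (h : ∀ P : Finset (Set Ω), ↑P ⊆ S → (P : Set (Set Ω)).PairwiseDisjoint id →
      μhat (⋃₀ ↑P) = ∑ C ∈ P, μ C) {C : Set Ω} (hC : C ∈ S) : μhat C = μ C := by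
  simpa using h {C} (by simpa using hC) (by simp)

lemma max_sum_le (P : Finset (Set Ω)) (μ : Set Ω → EReal) :
    max (∑ C ∈ P, μ C) 0 ≤ ∑ C ∈ P, max (μ C) 0 :=
  max_le (Finset.sum_le_sum fun _ _ => le_max_left _ _)
    (Finset.sum_nonneg fun _ _ => le_max_right _ _)

/-- Negation is not additive on `EReal`, but if a summand on the left is `⊥`, then the right-hand
side is `⊤`, so no restriction on the values of `μ` is needed. -/
lemma max_neg_sum_le (P : Finset (Set Ω)) (μ : Set Ω → EReal) :
    max (-∑ C ∈ P, μ C) 0 ≤ ∑ C ∈ P, max (-μ C) 0 := by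
  classical
  refine max_le ?_ (Finset.sum_nonneg fun _ _ => le_max_right _ _)
  induction P using Finset.induction_on with
  | empty => simp
  | insert c P hc ih =>
    rw [Finset.sum_insert hc, Finset.sum_insert hc]
    have hnn : (0 : EReal) ≤ ∑ C ∈ P, max (-μ C) 0 :=
      Finset.sum_nonneg fun _ _ => le_max_right _ _
    by_cases h1 : μ c = ⊥
    · rw [h1, EReal.neg_bot, max_eq_left le_top,
        EReal.top_add_of_ne_bot (EReal.bot_lt_zero.trans_le hnn).ne']
      exact le_top
    by_cases h2 : ∑ C ∈ P, μ C = ⊥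
    · rw [h2, EReal.neg_bot] at ih
      rw [top_le_iff.1 ih, EReal.add_top_of_ne_bot
        (EReal.bot_lt_zero.trans_le (le_max_right _ _)).ne']
      exact le_top
    rw [EReal.neg_add (Or.inl h1) (Or.inr h2), sub_eq_add_neg]
    exact add_le_add (le_max_left _ _) ih

/-- the supremum of the additive extensions to the generated ring equals the
additive extension of the supremum; in particular `(μ^)⁺ = (μ⁺)^` and `(μ^)⁻ = (μ⁻)^`. -/
theorem statement15 {Ω J : Type*} (S : Set (Set Ω)) (hS : MeasureTheory.IsSetSemiring S)
    (ν : J → Set Ω → EReal) (hν : ∀ j, IsCharge S (ν j)) (hadm : Admissible S ν)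
    (νhat : J → Set Ω → EReal)
    (hext : ∀ j, ∀ P : Finset (Set Ω), ↑P ⊆ S →
      (P : Set (Set Ω)).PairwiseDisjoint id → νhat j (⋃₀ ↑P) = ∑ C ∈ P, ν j C)
    (μ : Set Ω → EReal) (hμ : IsCharge S μ) (μhat : Set Ω → EReal)
    (hμext : ∀ P : Finset (Set Ω), ↑P ⊆ S →
      (P : Set (Set Ω)).PairwiseDisjoint id → μhat (⋃₀ ↑P) = ∑ C ∈ P, μ C) :
    (∀ P : Finset (Set Ω), ↑P ⊆ S → (P : Set (Set Ω)).PairwiseDisjoint id →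
      supFun (genRing S) νhat (⋃₀ ↑P) = ∑ C ∈ P, supFun S ν C) ∧
    (∀ P : Finset (Set Ω), ↑P ⊆ S → (P : Set (Set Ω)).PairwiseDisjoint id →
      pos (genRing S) μhat (⋃₀ ↑P) = ∑ C ∈ P, pos S μ C) ∧
    (∀ P : Finset (Set Ω), ↑P ⊆ S → (P : Set (Set Ω)).PairwiseDisjoint id →
      neg (genRing S) μhat (⋃₀ ↑P) = ∑ C ∈ P, neg S μ C) := by
  have h0 : ∅ ∈ S := hS.empty_mem
  -- an empty index set would make `⨆ j, ν j ∅` equal to `⊥`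
  have hJ : Nonempty J := by
    by_contra h
    rw [not_nonempty_iff] at h
    simpa using hadm ∅ h0
  refine ⟨?_, ?_, ?_⟩
  · refine partSup_genRing (f := fun A => ⨆ j, ν j A) (g := fun A => ⨆ j, νhat j A) hS
      (by simp [(hν _).empty]) (fun C hC => iSup_congr fun j => hat_eq (hext j) hC) ?_
    intro P hPS hPd
    refine iSup_le fun j => ?_
    rw [hext j P hPS hPd]
    exact Finset.sum_le_sum fun C _ => le_iSup (fun j => ν j C) j
  · refine partSup_genRing (f := fun A => max (μ A) 0) (g := fun A => max (μhat A) 0) hS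
      (by simp [hμ.empty]) (fun C hC => by simp only [hat_eq hμext hC]) ?_
    intro P hPS hPd
    simpa only [hμext P hPS hPd] using max_sum_le P μ
  · refine partSup_genRing (f := fun A => max (-μ A) 0) (g := fun A => max (-μhat A) 0) hS
      (by simp [hμ.empty]) (fun C hC => by simp only [hat_eq hμext hC]) ?_
    intro P hPS hPd
    simpa only [hμext P hPS hPd] using max_neg_sum_le P μ

end SignedCharges
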